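/- arXiv:1412.8525 — 2 statements merged into one kernel-verified Lean document; each statement's English description precedes it below -/
import Mathlib

section
/- Fix n : ℕ and let SA n denote the set of self-adjoint ℂ-linear endomorphisms of EuclideanSpace ℂ (Fin n). For p ∈ [0,1], r : ℝ, and A ∈ SA n, define the lifting Λ^{p,r,A} for the functor Q n : X ↦ (SA n → D (ℝ × X)) by Λ^{p,r,A} X U = { g : SA n → D (ℝ × X) | ∑ over those pairs (r, u) in (g A).support with u ∈ U of (g A) (r, u) = p }. The family (Λ^{p,r,A})_{p ∈ [0,1], r ∈ ℝ, A ∈ SA n} is separating for Q n: for every type X and all g, g' ∈ Q n X with g ≠ g', there exist p, r, A and U : Set X such that exactly one of g and g' belongs to Λ^{p,r,A} X U. -/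
open CategoryTheory
open scoped NNReal Classical

universe u v

/-- The finite distribution functor `D : Type u ⥤ Type u`. -/
noncomputable def DistFunctor : Type u ⥤ Type u where
  obj X := { d : X →₀ ℝ≥0 // ∑ x ∈ d.support, d x = 1 }
  map f := ↾fun d => ⟨Finsupp.mapDomain f d.1, by
    have h : (Finsupp.mapDomain f d.1).sum (fun _ v => v) = d.1.sum (fun _ v => v) :=
      Finsupp.sum_mapDomain_index (fun _ => rfl) (fun _ _ _ => rfl)
    simpa [Finsupp.sum] using h.trans (by simpa [Finsupp.sum] using d.2)⟩
  map_id X := by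
    refine ConcreteCategory.hom_ext _ _ fun d => ?_
    exact Subtype.ext (by simp [CategoryTheory.types_id, Finsupp.mapDomain_id])
  map_comp f g := by
    refine ConcreteCategory.hom_ext _ _ fun d => ?_
    exact Subtype.ext (by simp [CategoryTheory.types_comp, Finsupp.mapDomain_comp])

/-- The functor `X ↦ D (ℝ × X)`. -/
noncomputable def DRFunctor : Type u ⥤ Type u where
  obj X := DistFunctor.obj (ℝ × X)
  map {X Y} f := DistFunctor.map (↾(Prod.map id f : ℝ × X → ℝ × Y))
  map_id X := DistFunctor.map_id (ℝ × X)
  map_comp {X Y Z} f g :=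
    DistFunctor.map_comp (↾(Prod.map id f : ℝ × X → ℝ × Y)) (↾(Prod.map id g : ℝ × Y → ℝ × Z))

/-- The self-adjoint `ℂ`-linear endomorphisms of `EuclideanSpace ℂ (Fin n)`. -/
def SA (n : ℕ) : Type :=
  { A : EuclideanSpace ℂ (Fin n) →ₗ[ℂ] EuclideanSpace ℂ (Fin n) // IsSelfAdjoint A }

/-- The distribution based quantum signature functor `Q n : X ↦ (SA n → D (ℝ × X))`. -/
noncomputable def QFunctor (n : ℕ) : Type u ⥤ Type u where
  obj X := SA n → DRFunctor.obj X
  map f := ↾fun g A => DRFunctor.map f (g A)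
  map_id X := by refine ConcreteCategory.hom_ext _ _ fun g => ?_; funext A; simp
  map_comp f g := by refine ConcreteCategory.hom_ext _ _ fun h => ?_; funext A; simp

/-- `Λ^{p,r,A}`: the lifting for `Q n` given by the mass that `g A` puts on pairs `(r, u)`
with `u ∈ U`. -/
noncomputable def qLifting (n : ℕ) (p : ℝ≥0) (r : ℝ) (A : SA n)
    (X : Type u) (U : Set X) : Set ((QFunctor n).obj X) :=
  { g | ∑ z ∈ (g A).1.support.filter (fun z => z.1 = r ∧ z.2 ∈ U), (g A).1 z = p }

/-- The mass a finitely supported function puts on `{r} × {x}` is its value at `(r, x)`. -/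
theorem sum_filter_singleton_aux {X : Type u} (d : ℝ × X →₀ ℝ≥0) (r : ℝ) (x : X) :
    ∑ z ∈ d.support.filter (fun z => z.1 = r ∧ z.2 ∈ ({x} : Set X)), d z = d (r, x) := by
  have hf : ∀ z : ℝ × X, (z.1 = r ∧ z.2 ∈ ({x} : Set X)) ↔ z = (r, x) := by
    rintro ⟨a, b⟩
    simp
  simp only [hf]
  rw [Finset.sum_filter, Finset.sum_ite_eq']
  split_ifs with hz
  · rfl
  · exact (Finsupp.notMem_support_iff.mp hz).symm

/-- The family `(Λ^{p,r,A})_{p ∈ [0,1], r ∈ ℝ, A ∈ SA n}` is separating for `Q n`. -/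
theorem qLifting_isSeparating (n : ℕ) (X : Type u)
    (g g' : (QFunctor n).obj X) (h : g ≠ g') :
    ∃ (p : ℝ≥0), p ∈ Set.Icc (0 : ℝ≥0) 1 ∧
      ∃ (r : ℝ) (A : SA n) (U : Set X),
        Xor' (g ∈ qLifting n p r A X U) (g' ∈ qLifting n p r A X U) := by
  obtain ⟨A, hA⟩ := Function.ne_iff.mp h
  have hA' : (g A).1 ≠ (g' A).1 := fun e => hA (Subtype.ext e)
  obtain ⟨⟨r, x⟩, hz⟩ := Finsupp.ne_iff.mp hA'
  refine ⟨(g A).1 (r, x), ⟨zero_le, ?_⟩, r, A, {x}, Or.inl ⟨?_, ?_⟩⟩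
  · by_cases hm : (r, x) ∈ (g A).1.support
    · calc (g A).1 (r, x) ≤ ∑ z ∈ (g A).1.support, (g A).1 z :=
            Finset.single_le_sum (f := fun z => (g A).1 z) (fun _ _ => zero_le) hm
        _ = 1 := (g A).2
    · rw [Finsupp.notMem_support_iff.mp hm]
      exact zero_le
  · exact sum_filter_singleton_aux (g A).1 r x
  · intro hg'
    exact hz (((sum_filter_singleton_aux (g' A).1 r x).symm.trans hg').symm)
end

section
/- Fix n : ℕ and let SA n denote the set of self-adjoint ℂ-linear endomorphisms of EuclideanSpace ℂ (Fin n). The distribution based quantum signature functor Q n : Type u ⥤ Type u, sending X to SA n → D (ℝ × X), is accessible: for every regular cardinal κ greater than the cardinality of the continuum, Q n preserves κ-filtered colimits. -/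
open CategoryTheory
open scoped NNReal Classical

universe u

/-- A category `J` is `κ`-filtered if every diagram in `J` of size less than `κ`
(indexed by a small category with fewer than `κ` arrows) admits a cocone. -/
def IsCardinalFiltered (J : Type u) [Category.{u} J] (κ : Cardinal.{u}) : Prop :=
  ∀ (A : Type u) [SmallCategory A], Cardinal.mk (Arrow A) < κ →
    ∀ (F : A ⥤ J), Nonempty (Limits.Cocone F)

namespace QAcc

/-- All the second coordinates of points in the supports of a `Q n`-element. -/
def supp {n : ℕ} {X : Type u} (x : (QFunctor.{u} n).obj X) : Set X :=
  ⋃ A : SA n, Prod.snd '' (((x A).1.support : Finset (ℝ × X)) : Set (ℝ × X))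

lemma map_congr {n : ℕ} {X Y : Type u} (x : (QFunctor.{u} n).obj X) (f g : X ⟶ Y)
    (h : ∀ z ∈ supp x, f z = g z) : (QFunctor.{u} n).map f x = (QFunctor.{u} n).map g x := by
  funext A
  apply Subtype.ext
  change Finsupp.mapDomain (Prod.map id f) (x A).1 = Finsupp.mapDomain (Prod.map id g) (x A).1
  refine Finsupp.mapDomain_congr fun p hp => ?_
  refine Prod.ext rfl (h p.2 ?_)
  exact Set.mem_iUnion.2 ⟨A, p, hp, rfl⟩

lemma supp_nonempty {n : ℕ} {X : Type u} (x : (QFunctor.{u} n).obj X) : Nonempty X := by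
  have A : SA n := ⟨0, IsSelfAdjoint.zero _⟩
  by_contra hX
  have : IsEmpty X := not_nonempty_iff.1 hX
  have h := (x A).2
  rw [Finset.sum_eq_zero (fun p _ => isEmptyElim p.2)] at h
  exact zero_ne_one h

lemma mk_SA_le (n : ℕ) : Cardinal.mk (SA n) ≤ Cardinal.continuum := by
  have h1 : Cardinal.mk (SA n) ≤ Cardinal.mk (Fin n → Fin n → ℂ) := by
    refine Cardinal.mk_le_of_injective
      (f := fun A i j => A.1 (EuclideanSpace.basisFun (Fin n) ℂ i) j) ?_
    intro A B h
    apply Subtype.ext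
    refine (EuclideanSpace.basisFun (Fin n) ℂ).toBasis.ext fun i => ?_
    ext j
    simpa using congrFun (congrFun h i) j
  refine h1.trans ?_
  have hle := Cardinal.aleph0_le_continuum.{0}
  simp only [Cardinal.mk_pi, Cardinal.prod_const, Cardinal.mk_complex, Cardinal.mk_fin,
    Cardinal.lift_id, Cardinal.power_natCast]
  exact (pow_le_pow_left' (Cardinal.power_nat_le hle) n).trans (Cardinal.power_nat_le hle)

lemma card_SA (n : ℕ) (κ : Cardinal.{u}) (h : Cardinal.continuum.{u} < κ) :
    HasCardinalLT (SA n) κ := by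
  have := Cardinal.lift_le.{u}.2 (mk_SA_le n)
  rw [Cardinal.lift_continuum] at this
  simpa [HasCardinalLT] using this.trans_lt h

lemma card_supp {n : ℕ} {X : Type u} (x : (QFunctor.{u} n).obj X) (κ : Cardinal.{u})
    [Fact κ.IsRegular] (h : Cardinal.continuum.{u} < κ) : HasCardinalLT (supp x) κ := by
  refine hasCardinalLT_iUnion _ (card_SA n κ h) fun A => ?_
  have : Finite (Prod.snd '' (((x A).1.support : Finset (ℝ × X)) : Set (ℝ × X))) :=
    ((Finset.finite_toSet _).image _).to_subtype
  exact hasCardinalLT_of_finite _ _ (Fact.out : κ.IsRegular).aleph0_le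

end QAcc

open QAcc in
/-- The quantum signature functor `Q n` is accessible: it preserves `κ`-filtered colimits
for every regular cardinal `κ` greater than the cardinality of the continuum. -/
theorem qFunctor_accessible (n : ℕ) :
    ∀ κ : Cardinal.{u}, κ.IsRegular → Cardinal.continuum.{u} < κ →
      ∀ (J : Type u) [SmallCategory J], IsCardinalFiltered J κ →
        Limits.PreservesColimitsOfShape J (QFunctor.{u} n) := by
  intro κ hκ hc J _ hJ
  have : Fact κ.IsRegular := ⟨hκ⟩
  have : CategoryTheory.IsCardinalFiltered J κ :=
    ⟨fun {A} _ F hA => hJ A ((hasCardinalLT_iff_cardinal_mk_lt _ _).1 hA) F⟩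
  have := isFiltered_of_isCardinalFiltered J κ
  refine ⟨fun {F} => ⟨fun {c} hcol => ⟨?_⟩⟩⟩
  refine Limits.Types.FilteredColimit.isColimitOf' _ _ (fun x => ?_) (fun i x y h => ?_)
  · change (QFunctor.{u} n).obj c.pt at x
    have hS := card_supp x κ hc
    choose j g hg using fun z : supp x => Limits.Types.jointly_surjective_of_isColimit hcol z.1
    let m := CategoryTheory.IsCardinalFiltered.max j hS
    let s : supp x → F.obj m := fun z => F.map (CategoryTheory.IsCardinalFiltered.toMax j hS z) (g z)
    have hs : ∀ z, c.ι.app m (s z) = z.1 := fun z => by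
      rw [← hg z]
      exact ConcreteCategory.congr_hom (c.w (CategoryTheory.IsCardinalFiltered.toMax j hS z)) (g z)
    have hne : (supp x).Nonempty := by
      have A : SA n := ⟨0, IsSelfAdjoint.zero _⟩
      by_contra hX
      have h := (x A).2
      rw [Finset.sum_eq_zero (fun p hp => (hX ⟨p.2, Set.mem_iUnion.2 ⟨A, p, hp, rfl⟩⟩).elim)] at h
      exact zero_ne_one h
    let d : F.obj m := s ⟨_, hne.some_mem⟩
    let t : c.pt ⟶ F.obj m := ↾fun z => if hz : z ∈ supp x then s ⟨z, hz⟩ else d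
    refine ⟨m, (QFunctor n).map t x, ?_⟩
    have h1 : (QFunctor n).map (t ≫ c.ι.app m) x = (QFunctor n).map (𝟙 _) x := by
      refine map_congr x _ _ fun z hz => ?_
      have : t z = s ⟨z, hz⟩ := dif_pos hz
      change c.ι.app m (t z) = z
      rw [this, hs]
    rw [Functor.map_comp, CategoryTheory.Functor.map_id] at h1
    exact h1.symm
  · change (QFunctor.{u} n).obj (F.obj i) at x y
    change (QFunctor.{u} n).map (c.ι.app i) x = (QFunctor.{u} n).map (c.ι.app i) y at h
    change ∃ (k : J) (f : i ⟶ k), (QFunctor n).map (F.map f) x = (QFunctor n).map (F.map f) y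
    have hS : HasCardinalLT (supp x ∪ supp y : Set (F.obj i)) κ :=
      hasCardinalLT_union hκ.aleph0_le (card_supp x κ hc) (card_supp y κ hc)
    set S : Set (F.obj i) := supp x ∪ supp y
    let P := { p : S × S // c.ι.app i p.1.1 = c.ι.app i p.2.1 }
    have hP : HasCardinalLT P κ :=
      (hasCardinalLT_prod hκ.aleph0_le hS hS).of_injective _ Subtype.val_injective
    choose k a hk using fun p : P =>
      (Limits.Types.FilteredColimit.isColimit_eq_iff' hcol _ _).1 p.2
    obtain ⟨m, b, f, hf⟩ := CategoryTheory.IsCardinalFiltered.wideSpan a hP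
    have key : ∀ z ∈ S, ∀ w ∈ S, c.ι.app i z = c.ι.app i w → F.map f z = F.map f w := by
      intro z hz w hw hzw
      let p : P := ⟨(⟨z, hz⟩, ⟨w, hw⟩), hzw⟩
      have h2 : F.map (a p) z = F.map (a p) w := hk p
      rw [← hf p, Functor.map_comp]
      exact congrArg (F.map (b p)) h2
    obtain ⟨e⟩ := supp_nonempty x
    let t : c.pt ⟶ F.obj m := ↾fun v =>
      if hv : ∃ z ∈ S, c.ι.app i z = v then F.map f hv.choose else F.map f e
    have ht : ∀ z ∈ S, F.map f z = (c.ι.app i ≫ t) z := by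
      intro z hz
      have hv : ∃ w ∈ S, c.ι.app i w = c.ι.app i z := ⟨z, hz, rfl⟩
      have : t (c.ι.app i z) = F.map f hv.choose := dif_pos hv
      exact (key z hz _ hv.choose_spec.1 hv.choose_spec.2.symm).trans this.symm
    refine ⟨m, f, ?_⟩
    rw [map_congr x (F.map f) (c.ι.app i ≫ t) fun z hz => ht z (Or.inl hz),
      map_congr y (F.map f) (c.ι.app i ≫ t) fun z hz => ht z (Or.inr hz), Functor.map_comp]
    exact congrArg ((QFunctor n).map t) h
end
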